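/- arXiv:0802.0959 — 2 statements merged into one kernel-verified Lean document; each statement's English description precedes it below -/
import Mathlib

section
/- Let k be an algebraically closed field of characteristic zero and let f ∈ k[x_0, x_1, x_2, x_3] be a squarefree homogeneous polynomial of degree d ≥ 3. Then the Hessian polynomial h_f is identically zero if and only if there exists a nonzero vector (c_0, c_1, c_2, c_3) ∈ k^4 such that c_0·∂f/∂x_0 + c_1·∂f/∂x_1 + c_2·∂f/∂x_2 + c_3·∂f/∂x_3 = 0, i.e. if and only if the hypersurface V(f) ⊂ P^3 is a cone. -/
open MvPolynomial

/-- The Hessian polynomial of a multivariate polynomial: the determinant of the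
matrix of second partial derivatives. -/
noncomputable def hessianDet {k : Type*} [CommRing k] {m : ℕ}
    (f : MvPolynomial (Fin m) k) : MvPolynomial (Fin m) k :=
  Matrix.det (Matrix.of fun i j => pderiv i (pderiv j f))

/-!
Write `D_h = ∑ h i ∂ᵢ` for a vector `h` of polynomials. If the Hessian of `f` vanishes, the partial
derivatives of `f` are algebraically dependent. Evaluating the gradient of a relation of least
degree at the gradient of `f`, and removing common factors, gives forms `h i` of the same degree
without common factor such that `D_h (h i) = 0` and `D_h (∂ⱼ f) = 0` (Gordan and Noether).

Constancy along `D_h` means `h (x + t h x) = h x`, hence `h (h x) = 0`: the image of `h` lies in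
the zero locus of `h`, which has codimension at least two. In at most four variables the image is
thus a cone of dimension at most two, and this forces `h` to vanish on the join of the image with
each of its points `z`. The join also has dimension at most two, so the projection of the image
from `z`, given by the minors `z i h j - z j h i`, has dimension at most one. These minors are
therefore proportional, and `h i = α i a + β i b` for two coprime forms `a` and `b`. Finally
`D_h f = 0` and `D_h (∂ⱼ f) = 0` force `∑ α i ∂ᵢ f = ∑ β i ∂ᵢ f = 0`.
-/

namespace GordanNoether

section AlgebraicIndependence

variable {k S A : Type*} [CommRing k] [CommRing S] [Algebra k S] [CommRing A] [Algebra k A]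

theorem algebraicIndependent_finCons_iff {n : ℕ} {p : S} {v : Fin n → S} :
    AlgebraicIndependent k (Fin.cons p v : Fin (n + 1) → S) ↔
      AlgebraicIndependent k v ∧ Transcendental (Algebra.adjoin k (Set.range v)) p := by
  rw [← AlgebraicIndependent.option_iff, ← algebraicIndependent_equiv (finSuccEquiv n).symm]
  congr! 1
  funext o
  cases o <;> simp

-- A relation of minimal degree in `p` has a nonzero constant term, which specializes to a
-- relation among the `φ (v i)`.
theorem algebraicIndependent_finCons_of_map_eq_zero [IsDomain S] (φ : S →ₐ[k] A) {p : S}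
    (hp : p ≠ 0) (hφp : φ p = 0) {n : ℕ} {v : Fin n → S}
    (hv : AlgebraicIndependent k (φ ∘ v)) :
    AlgebraicIndependent k (Fin.cons p v : Fin (n + 1) → S) := by
  refine algebraicIndependent_finCons_iff.mpr ⟨.of_comp φ hv, fun halg => ?_⟩
  obtain ⟨F, hF_coeff, hF⟩ :=
    halg.exists_nonzero_coeff_and_aeval_eq_zero (mem_nonZeroDivisors_of_ne_zero hp)
  obtain ⟨G, hG⟩ := (Algebra.adjoin_range_eq_range_aeval k v).le (F.coeff 0).2
  have hφ_coeff : φ (F.coeff 0 : S) = 0 := by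
    rw [← Polynomial.divX_mul_X_add F] at hF
    simpa [hφp, Subalgebra.algebraMap_eq] using congrArg φ hF
  have hG_zero : G = 0 := by
    refine hv.eq_zero_of_aeval_eq_zero _ ?_
    rw [← hφ_coeff, ← hG]
    exact (comp_aeval_apply (f := v) φ G).symm
  refine hF_coeff (Subtype.ext ?_)
  rw [← hG, hG_zero, map_zero, ZeroMemClass.coe_zero]

theorem algebraicIndependent_finCons_finCons_of_map_eq_zero [IsDomain S] (φ : S →ₐ[k] A)
    {q u p : S} (hq : Prime q) (hφq : φ q = 0) (hu : u ≠ 0) (hqu : q ∣ u)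
    (hqp : ¬ q ∣ p) (hφp : φ p = 0) {n : ℕ} {v : Fin n → S}
    (hv : AlgebraicIndependent k (φ ∘ v)) :
    AlgebraicIndependent k (Fin.cons u (Fin.cons p v) : Fin (n + 2) → S) := by
  have : (Ideal.span {q}).IsPrime := (Ideal.span_singleton_prime hq.ne_zero).2 hq
  have mk_eq_zero_iff (a : S) : Ideal.Quotient.mkₐ k (Ideal.span {q}) a = 0 ↔ q ∣ a :=
    Ideal.Quotient.eq_zero_iff_dvd q a
  let φq : (S ⧸ Ideal.span {q}) →ₐ[k] A := Ideal.Quotient.liftₐ (Ideal.span {q}) φ fun a ha => by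
    obtain ⟨b, rfl⟩ := Ideal.mem_span_singleton.mp ha
    rw [map_mul, hφq, zero_mul]
  refine algebraicIndependent_finCons_of_map_eq_zero (Ideal.Quotient.mkₐ k (Ideal.span {q})) hu
    ((mk_eq_zero_iff u).2 hqu) ?_
  rw [Fin.comp_cons]
  exact algebraicIndependent_finCons_of_map_eq_zero φq (mt (mk_eq_zero_iff p).1 hqp) hφp hv

-- Two relatively prime equations cut out a locus of codimension at least two.
theorem add_two_le_card_of_algebraicIndependent {k A σ ι : Type*} [Field k] [CommRing A]
    [IsDomain A] [Algebra k A] [Fintype σ] (φ : MvPolynomial σ k →ₐ[k] A) {p : ι → MvPolynomial σ k}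
    (hp : ∀ q, (∀ i, q ∣ p i) → IsUnit q) (hφp : ∀ i, φ (p i) = 0) {n : ℕ}
    {v : Fin n → MvPolynomial σ k} (hv : AlgebraicIndependent k (φ ∘ v)) :
    n + 2 ≤ Fintype.card σ := by
  have hker : RingHom.ker φ ≠ ⊥ := by
    intro hbot
    refine not_isUnit_zero (hp 0 fun i => ?_)
    have : p i ∈ RingHom.ker φ := hφp i
    simp_all
  obtain ⟨q, hφq, hq⟩ := (RingHom.ker_isPrime φ).exists_mem_prime_of_ne_bot hker
  obtain ⟨i, hi⟩ := not_forall.mp (mt (hp q) hq.not_isUnit)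
  have hcard := (algebraicIndependent_finCons_finCons_of_map_eq_zero φ hq hφq hq.ne_zero dvd_rfl
    hi (hφp i) hv).lift_cardinalMk_le_trdeg
  rw [MvPolynomial.trdeg_of_isDomain, Cardinal.mk_fin, Cardinal.mk_fintype] at hcard
  simp only [Cardinal.lift_natCast] at hcard
  exact_mod_cast hcard

end AlgebraicIndependence

section Derivations

theorem pderiv_comm {R σ : Type*} [CommRing R] (i j : σ) (p : MvPolynomial σ R) :
    pderiv i (pderiv j p) = pderiv j (pderiv i p) := by
  classical
  have hcomm : ⁅(pderiv i : Derivation R (MvPolynomial σ R) _), pderiv j⁆ = 0 :=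
    derivation_ext fun l => by
      rw [Derivation.commutator_apply]
      simp only [pderiv_X, Pi.single_apply]
      split_ifs <;> simp
  exact sub_eq_zero.mp (DFunLike.congr_fun hcomm p)

theorem derivation_aeval {R A ι : Type*} [CommRing R] [CommRing A] [Algebra R A] [Fintype ι]
    (D : Derivation R A A) (v : ι → A) (p : MvPolynomial ι R) :
    D (aeval v p) = ∑ i, aeval v (pderiv i p) * D (v i) := by
  classical
  induction p using MvPolynomial.induction_on with
  | C a => simp
  | add p q hp hq => simp only [map_add, hp, hq, add_mul, Finset.sum_add_distrib]
  | mul_X p j hp =>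
    simp [hp, add_mul, Finset.sum_add_distrib, pderiv_X, Pi.single_apply, Finset.mul_sum,
      apply_ite, mul_assoc]

theorem mkDerivation_apply_eq_sum {R σ : Type*} [CommRing R] [Fintype σ]
    (h : σ → MvPolynomial σ R) (p : MvPolynomial σ R) :
    mkDerivation R h p = ∑ i, h i * pderiv i p := by
  simpa [mul_comm] using derivation_aeval (mkDerivation R h) X p

theorem mkDerivation_smul {R σ : Type*} [CommRing R] (q : MvPolynomial σ R)
    (h : σ → MvPolynomial σ R) : mkDerivation R (q • h) = q • mkDerivation R h :=
  derivation_ext fun i => by simp [mkDerivation_X]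

theorem derivation_eq_zero_of_isAlgebraic {k R : Type*} [CommRing k] [CommRing R] [IsDomain R]
    [CharZero R] [Algebra k R] (D : Derivation k R R) {B : Subalgebra k R}
    (hB : ∀ b ∈ B, D b = 0) {x : R} (hx : IsAlgebraic B x) : D x = 0 := by
  have map_aeval (F : Polynomial B) :
      D (Polynomial.aeval x F) = Polynomial.aeval x (Polynomial.derivative F) * D x := by
    induction F using Polynomial.induction_on' with
    | add F G hF hG => simp only [map_add, hF, hG, add_mul]
    | monomial n b =>
      simp [Polynomial.aeval_monomial, Polynomial.derivative_monomial, Subalgebra.algebraMap_eq,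
        hB b b.2, mul_assoc]
  obtain ⟨F, hF_ne, hF⟩ := hx
  induction hn : F.natDegree using Nat.strong_induction_on generalizing F with
  | h n ih =>
    have hn_ne : F.natDegree ≠ 0 := by
      intro hdeg
      rw [Polynomial.eq_C_of_natDegree_eq_zero hdeg] at hF hF_ne
      simp_all
    rcases mul_eq_zero.mp ((map_aeval F).symm.trans (by rw [hF, map_zero])) with hF' | hDx
    · refine ih _ ?_ (Polynomial.derivative F) ?_ hF' rfl
      · exact hn ▸ Polynomial.natDegree_derivative_lt hn_ne
      · have : CharZero B :=
            ⟨fun a b hab => by simpa using congrArg (Subtype.val : B → R) hab⟩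
        exact mt Polynomial.derivative_eq_zero.mp hn_ne
    · exact hDx

theorem not_algebraicIndependent_of_mkDerivation_eq_zero {k σ : Type*} [Field k] [CharZero k]
    [Finite σ] {c g : σ → MvPolynomial σ k} (hc : c ≠ 0) (hg : ∀ j, mkDerivation k c (g j) = 0) :
    ¬ AlgebraicIndependent k g := by
  intro hind
  have hbasis : IsTranscendenceBasis k g :=
    hind.isTranscendenceBasis_of_lift_trdeg_le_of_finite (by simp)
  have hadjoin : ∀ b ∈ Algebra.adjoin k (Set.range g), mkDerivation k c b = 0 := fun b hb =>
    Derivation.eqOn_adjoin (D1 := mkDerivation k c) (D2 := 0) (by rintro _ ⟨j, rfl⟩; exact hg j) hb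
  refine hc (funext fun j => ?_)
  simpa using derivation_eq_zero_of_isAlgebraic (mkDerivation k c) hadjoin
    (hbasis.isAlgebraic.isAlgebraic (X j))

end Derivations

theorem exists_irreducible_dvd_map_eq_zero {S A F : Type*} [CommMonoidWithZero S] [WfDvdMonoid S]
    [MonoidWithZero A] [NoZeroDivisors A] [Nontrivial A] [FunLike F S A]
    [MonoidWithZeroHomClass F S A] (φ : F) {p : S} (hp : p ≠ 0) (hφp : φ p = 0) :
    ∃ q, Irreducible q ∧ q ∣ p ∧ φ q = 0 := by
  induction p using WfDvdMonoid.induction_on_irreducible with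
  | zero => exact absurd rfl hp
  | unit u hu => exact absurd hφp (hu.map φ).ne_zero
  | mul a q ha hq ih =>
    rw [map_mul, mul_eq_zero] at hφp
    rcases hφp with hφq | hφa
    · exact ⟨q, hq, dvd_mul_right q a, hφq⟩
    · obtain ⟨r, hr, hra, hφr⟩ := ih ha hφa
      exact ⟨r, hr, hra.mul_left q, hφr⟩

section LineHom

variable {k σ A : Type*} [CommRing k] [CommRing A] [Algebra k A]

/-- Restriction of polynomials to the line `t ↦ a + t b`, whose base point and direction may have
coordinates in any `k`-algebra `A`; the parameter `t` is `Polynomial.X`. -/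
noncomputable def lineHom (a b : σ → A) : MvPolynomial σ k →ₐ[k] Polynomial A :=
  aeval fun i => Polynomial.C (a i) + Polynomial.C (b i) * Polynomial.X

@[simp]
theorem lineHom_X (a b : σ → A) (i : σ) :
    lineHom a b (X i : MvPolynomial σ k) =
      Polynomial.C (a i) + Polynomial.C (b i) * Polynomial.X :=
  aeval_X _ i

theorem eval_lineHom (a b : σ → A) (t : A) (p : MvPolynomial σ k) :
    (lineHom a b p).eval t = aeval (fun i => a i + b i * t) p := by
  induction p using MvPolynomial.induction_on with
  | C r => simp
  | add p q hp hq => simp only [map_add, Polynomial.eval_add, hp, hq]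
  | mul_X p i hp => simp [hp]

theorem map_lineHom {B : Type*} [CommRing B] [Algebra k B] (φ : A →ₐ[k] B) (a b : σ → A)
    (p : MvPolynomial σ k) :
    (lineHom a b p).map (φ : A →+* B) = lineHom (φ ∘ a) (φ ∘ b) p := by
  induction p using MvPolynomial.induction_on with
  | C r => simp
  | add p q hp hq => simp only [map_add, Polynomial.map_add, hp, hq]
  | mul_X p i hp => simp [hp]

theorem lineHom_comp_linear (a b : σ → A) (s c : A) (p : MvPolynomial σ k) :
    (lineHom a b p).comp (Polynomial.C s + Polynomial.C c * Polynomial.X) =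
      lineHom (fun i => a i + b i * s) (fun i => b i * c) p := by
  induction p using MvPolynomial.induction_on with
  | C r => simp
  | add p q hp hq => simp only [map_add, Polynomial.add_comp, hp, hq]
  | mul_X p i hp =>
    simp only [map_mul, Polynomial.mul_comp, hp, lineHom_X, Polynomial.add_comp,
      Polynomial.C_comp, Polynomial.X_comp, map_add]
    ring

theorem coeff_zero_lineHom (a b : σ → A) (p : MvPolynomial σ k) :
    (lineHom a b p).coeff 0 = aeval a p := by
  rw [Polynomial.coeff_zero_eq_eval_zero, eval_lineHom]
  simp only [mul_zero, add_zero]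

theorem coeff_lineHom_monomial (a b : σ → A) (d : σ →₀ ℕ) (r : k) :
    (lineHom a b (monomial d r)).coeff d.degree = aeval b (monomial d r) := by
  have hcoeff := Polynomial.coeff_multiset_prod_of_natDegree_le
    (d.toMultiset.map fun i => Polynomial.C (a i) + Polynomial.C (b i) * Polynomial.X) 1
    (by simp only [Multiset.mem_map]; rintro _ ⟨i, -, rfl⟩; compute_degree)
  have hprod {B : Type _} [CommRing B] (g : σ → B) :
      (d.toMultiset.map g).prod = d.prod fun i n => g i ^ n := by
    rw [Finsupp.toMultiset_map, Finsupp.prod_toMultiset, Finsupp.prod_mapDomain_index]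
    exacts [fun _ => pow_zero _, fun _ _ _ => pow_add _ _ _]
  have hcard : d.toMultiset.card = d.degree := d.card_toMultiset
  rw [hprod, Multiset.map_map, hprod, Multiset.card_map, mul_one, hcard] at hcoeff
  simpa [lineHom, aeval_monomial] using congrArg (algebraMap k A r * ·) hcoeff

theorem degree_eq_of_mem_support {p : MvPolynomial σ k} {n : ℕ} (hp : p.IsHomogeneous n)
    {d : σ →₀ ℕ} (hd : d ∈ p.support) : d.degree = n :=
  of_not_not fun hdn => mem_support_iff.mp hd (hp.coeff_eq_zero hdn)

theorem coeff_lineHom_of_isHomogeneous (a b : σ → A) {p : MvPolynomial σ k} {n : ℕ}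
    (hp : p.IsHomogeneous n) : (lineHom a b p).coeff n = aeval b p := by
  rw [p.as_sum, map_sum, map_sum, Polynomial.finsetSum_coeff]
  refine Finset.sum_congr rfl fun d hd => ?_
  rw [← degree_eq_of_mem_support hp hd, coeff_lineHom_monomial]

theorem lineHom_zero_of_isHomogeneous (b : σ → A) {p : MvPolynomial σ k} {n : ℕ}
    (hp : p.IsHomogeneous n) :
    lineHom 0 b p = Polynomial.C (aeval b p) * Polynomial.X ^ n := by
  rw [p.as_sum, map_sum, map_sum, map_sum, Finset.sum_mul]
  refine Finset.sum_congr rfl fun d hd => ?_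
  obtain rfl : d.degree = n := degree_eq_of_mem_support hp hd
  have hprod : (d.prod fun _ n => Polynomial.X ^ n) = (Polynomial.X ^ d.degree : Polynomial A) :=
    Finset.prod_pow_eq_pow_sum _ _ _
  simp only [lineHom, aeval_monomial, Pi.zero_apply, map_zero, zero_add, mul_pow, Finsupp.prod_mul,
    hprod, map_mul, map_finsuppProd, map_pow, mul_assoc]
  rfl

theorem coeff_lineHom_zero_X (p : MvPolynomial σ k) (n : ℕ) :
    (lineHom 0 X p).coeff n = homogeneousComponent n p := by
  conv_lhs => rw [← sum_homogeneousComponent p]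
  simp only [map_sum, Polynomial.finsetSum_coeff,
    lineHom_zero_of_isHomogeneous _ (homogeneousComponent_isHomogeneous _ p),
    Polynomial.coeff_C_mul_X_pow, aeval_X_left_apply, Finset.sum_ite_eq]
  rw [ite_eq_left_iff]
  intro hn
  rw [homogeneousComponent_eq_zero _ _ (by simpa using hn)]

theorem algebraicIndependent_lineHom_zero [IsDomain k] {n : ℕ} (hn : n ≠ 0)
    {p : MvPolynomial σ k} (hp : p.IsHomogeneous n) {y : σ → k} (hy : aeval y p ≠ 0) :
    AlgebraicIndependent k (lineHom 0 y ∘ ![p]) := by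
  rw [algebraicIndependent_unique_type_iff]
  change Transcendental k (lineHom 0 y p)
  rw [lineHom_zero_of_isHomogeneous y hp]
  apply Polynomial.transcendental
  · rwa [Polynomial.natDegree_C_mul_X_pow _ _ hy]
  · rw [Polynomial.leadingCoeff_C_mul_X_pow]
    exact mem_nonZeroDivisors_of_ne_zero hy

end LineHom

section Homogeneous

theorem eq_monomial_of_mul_eq_monomial {R : Type*} [CommRing R] [IsDomain R]
    {F G : Polynomial R} {n : ℕ} {c : R} (hc : c ≠ 0) (hFG : F * G = Polynomial.monomial n c) :
    F = Polynomial.monomial F.natDegree F.leadingCoeff := by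
  have hFG_ne : F * G ≠ 0 := by rwa [hFG, Ne, Polynomial.monomial_eq_zero_iff]
  have hdeg := Polynomial.natDegree_mul (left_ne_zero_of_mul hFG_ne) (right_ne_zero_of_mul hFG_ne)
  have htrail := Polynomial.natTrailingDegree_mul (left_ne_zero_of_mul hFG_ne)
    (right_ne_zero_of_mul hFG_ne)
  rw [hFG, Polynomial.natDegree_monomial_eq n hc] at hdeg
  rw [hFG, Polynomial.natTrailingDegree_monomial hc] at htrail
  have hF_le := F.natTrailingDegree_le_natDegree
  have hG_le := G.natTrailingDegree_le_natDegree
  ext j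
  rcases lt_trichotomy j F.natDegree with hlt | rfl | hgt
  · rw [Polynomial.coeff_monomial, if_neg hlt.ne',
      Polynomial.coeff_eq_zero_of_lt_natTrailingDegree (by omega)]
  · rw [Polynomial.coeff_monomial_same, Polynomial.coeff_natDegree]
  · rw [Polynomial.coeff_monomial, if_neg hgt.ne, Polynomial.coeff_eq_zero_of_natDegree_lt hgt]

theorem isHomogeneous_totalDegree_of_mul {k σ : Type*} [CommRing k] [IsDomain k]
    {a b : MvPolynomial σ k} {n : ℕ} (hab : (a * b).IsHomogeneous n) (hab_ne : a * b ≠ 0) :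
    a.IsHomogeneous a.totalDegree := by
  have ha_monomial := eq_monomial_of_mul_eq_monomial (F := lineHom 0 X a) (G := lineHom 0 X b)
    (n := n) hab_ne <| by
      rw [← map_mul, lineHom_zero_of_isHomogeneous _ hab, aeval_X_left_apply,
        Polynomial.C_mul_X_pow_eq_monomial]
  generalize (lineHom 0 (X : σ → MvPolynomial σ k) a).natDegree = m at ha_monomial
  have ha_eq : a = homogeneousComponent m a := by
    have heval := congrArg (Polynomial.eval 1) ha_monomial
    have hcoeff := congrArg (Polynomial.coeff · m) ha_monomial
    simp only [eval_lineHom, Pi.zero_apply, zero_add, mul_one, aeval_X_left_apply,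
      Polynomial.eval_monomial, one_pow, coeff_lineHom_zero_X, Polynomial.coeff_monomial_same]
      at heval hcoeff
    rw [hcoeff]
    exact heval
  have ha : a.IsHomogeneous m := ha_eq ▸ homogeneousComponent_isHomogeneous m a
  rwa [ha.totalDegree (left_ne_zero_of_mul hab_ne)]

theorem eq_zero_of_dvd_of_isHomogeneous_of_lt {k σ : Type*} [CommRing k] [IsDomain k]
    {p q : MvPolynomial σ k} {m n : ℕ} (hp : p.IsHomogeneous m) (hq : q.IsHomogeneous n)
    (hnm : n < m) (hpq : p ∣ q) : q = 0 := by
  by_contra hq_ne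
  have hdeg := totalDegree_le_of_dvd_of_isDomain hpq hq_ne
  rw [hp.totalDegree (ne_zero_of_dvd_ne_zero hq_ne hpq), hq.totalDegree hq_ne] at hdeg
  omega

end Homogeneous

section LineHomDerivation

variable {k σ : Type*} [CommRing k] {h : σ → MvPolynomial σ k}

theorem succ_mul_coeff_succ_lineHom_X (hh : ∀ i, mkDerivation k h (h i) = 0)
    (p : MvPolynomial σ k) (n : ℕ) :
    (n + 1) * (lineHom X h p).coeff (n + 1) = mkDerivation k h ((lineHom X h p).coeff n) := by
  induction p using MvPolynomial.induction_on generalizing n with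
  | C r => cases n <;> simp
  | add p q hp hq => simp only [map_add, Polynomial.coeff_add, mul_add, hp, hq]
  | mul_X p i hp =>
    have hcoeff (n : ℕ) : (lineHom X h (p * X i)).coeff (n + 1) =
        (lineHom X h p).coeff (n + 1) * X i + (lineHom X h p).coeff n * h i := by
      simp [mul_add, ← mul_assoc]
    cases n with
    | zero =>
      have hp_zero := hp 0
      rw [hcoeff]
      simp only [Nat.cast_zero, zero_add, one_mul, map_mul, lineHom_X, Polynomial.mul_coeff_zero,
        Polynomial.coeff_add, Polynomial.coeff_C_zero, Polynomial.coeff_X_zero, mul_zero, add_zero,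
        Derivation.leibniz, mkDerivation_X, smul_eq_mul] at hp_zero ⊢
      linear_combination X i * hp_zero
    | succ n =>
      rw [hcoeff, hcoeff]
      simp only [Nat.cast_add, Nat.cast_one, map_add, Derivation.leibniz, mkDerivation_X,
        smul_eq_mul, ← hp, hh, mul_zero, zero_add]
      ring

variable [IsDomain k] [CharZero k]

theorem lineHom_X_eq_C_iff (hh : ∀ i, mkDerivation k h (h i) = 0) {p : MvPolynomial σ k} :
    lineHom X h p = Polynomial.C p ↔ mkDerivation k h p = 0 := by
  have hzero : (lineHom X h p).coeff 0 = p := by rw [coeff_zero_lineHom, aeval_X_left_apply]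
  constructor
  · intro hp
    have := succ_mul_coeff_succ_lineHom_X hh p 0
    rw [hzero, hp] at this
    simpa using this.symm
  · intro hp
    have hstep (n : ℕ) (hn : mkDerivation k h ((lineHom X h p).coeff n) = 0) :
        (lineHom X h p).coeff (n + 1) = 0 :=
      (mul_eq_zero.mp ((succ_mul_coeff_succ_lineHom_X hh p n).trans hn)).resolve_left
        (Nat.cast_add_one_ne_zero n)
    have hsucc (n : ℕ) : (lineHom X h p).coeff (n + 1) = 0 := by
      induction n with
      | zero => exact hstep 0 (by rw [hzero, hp])
      | succ n ih => exact hstep (n + 1) (by rw [ih, map_zero])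
    ext1 n
    cases n with
    | zero => rw [hzero, Polynomial.coeff_C_zero]
    | succ n => rw [hsucc, Polynomial.coeff_C_succ]

theorem mkDerivation_eq_zero_of_mul (hh : ∀ i, mkDerivation k h (h i) = 0)
    {a b : MvPolynomial σ k} (hab : mkDerivation k h (a * b) = 0) (hab_ne : a * b ≠ 0) :
    mkDerivation k h a = 0 := by
  rw [← lineHom_X_eq_C_iff hh] at hab ⊢
  have hmul : lineHom X h a * lineHom X h b ≠ 0 := by rwa [← map_mul, hab, Polynomial.C_ne_zero]
  have hdeg := Polynomial.natDegree_mul (left_ne_zero_of_mul hmul) (right_ne_zero_of_mul hmul)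
  rw [← map_mul, hab, Polynomial.natDegree_C] at hdeg
  rw [Polynomial.eq_C_of_natDegree_eq_zero (p := lineHom X h a) (by omega), coeff_zero_lineHom,
    aeval_X_left_apply]

-- `p (x + t h) = p x` has no `t ^ n` term.
theorem aeval_eq_zero_of_mkDerivation_eq_zero (hh : ∀ i, mkDerivation k h (h i) = 0)
    {p : MvPolynomial σ k} {n : ℕ} (hn : n ≠ 0) (hp : p.IsHomogeneous n)
    (hDp : mkDerivation k h p = 0) : aeval h p = 0 := by
  rw [← coeff_lineHom_of_isHomogeneous X h hp, (lineHom_X_eq_C_iff hh).mpr hDp,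
    Polynomial.coeff_C_of_ne_zero hn]

theorem lineHom_aeval_eq_C {A : Type*} [CommRing A] [Algebra k A]
    (hh : ∀ i, mkDerivation k h (h i) = 0) {p : MvPolynomial σ k} (hp : mkDerivation k h p = 0)
    (v : σ → A) : lineHom v (fun i => aeval v (h i)) p = Polynomial.C (aeval v p) := by
  have hmap := congrArg (Polynomial.map (aeval v : _ →ₐ[k] A).toRingHom)
    ((lineHom_X_eq_C_iff hh).mpr hp)
  rw [Polynomial.map_C] at hmap
  refine Eq.trans ?_ hmap
  refine Eq.trans ?_ (map_lineHom (aeval v) X h p).symm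
  congr
  funext i
  exact (aeval_X v i).symm

theorem lineHom_C_comp_eq_C {z : σ → k} {p : MvPolynomial σ k}
    (hp : mkDerivation k (C ∘ z : σ → MvPolynomial σ k) p = 0) (v : σ → MvPolynomial σ k) :
    lineHom v (C ∘ z) p = Polynomial.C (aeval v p) := by
  simpa [Function.comp_def] using lineHom_aeval_eq_C (by simp) hp v

end LineHomDerivation

theorem exists_aeval_ne_zero {k σ : Type*} [CommRing k] [IsDomain k] [Infinite k]
    {p : MvPolynomial σ k} (hp : p ≠ 0) : ∃ y : σ → k, aeval y p ≠ 0 := by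
  by_contra! hzero
  exact hp (MvPolynomial.funext (by simpa [aeval_eq_eval] using hzero))

-- Choose `r` so that `a - r b` vanishes at a point where `b` does not.
theorem exists_eq_smul_of_not_algebraicIndependent {k σ : Type*} [Field k] [Infinite k] {n : ℕ}
    (hn : n ≠ 0) {a b : MvPolynomial σ k} (ha : a.IsHomogeneous n) (hb : b.IsHomogeneous n)
    (hb_ne : b ≠ 0) (hdep : ¬ AlgebraicIndependent k ![a, b]) : ∃ r : k, a = r • b := by
  obtain ⟨y, hy⟩ := exists_aeval_ne_zero hb_ne
  refine ⟨aeval y a / aeval y b, sub_eq_zero.mp (by_contra fun hab => hdep ?_)⟩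
  set r := aeval y a / aeval y b
  have hab_hom : (a - r • b).IsHomogeneous n :=
    (homogeneousSubmodule σ k n).sub_mem ha (Submodule.smul_mem _ r hb)
  have hab_map : lineHom 0 y (a - r • b) = 0 := by
    rw [lineHom_zero_of_isHomogeneous y hab_hom, map_sub, map_smul, smul_eq_mul,
      div_mul_cancel₀ _ hy, sub_self, map_zero, zero_mul]
  obtain ⟨hb_ind, htrans⟩ := algebraicIndependent_finCons_iff.mp <|
    algebraicIndependent_finCons_of_map_eq_zero (lineHom 0 y) hab hab_map
      (algebraicIndependent_lineHom_zero hn hb hy)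
  refine algebraicIndependent_finCons_iff.mpr ⟨hb_ind, fun halg => htrans (halg.sub ?_)⟩
  have hmem : b ∈ Algebra.adjoin k (Set.range ![b]) := Algebra.subset_adjoin ⟨0, rfl⟩
  exact isAlgebraic_algebraMap
    (⟨r • b, Subalgebra.smul_mem _ hmem r⟩ : Algebra.adjoin k (Set.range ![b]))

section HomogeneousRelations

variable {k σ : Type*} [CommRing k]

theorem exists_isHomogeneous_aeval_eq_zero {ι : Type*} {e : ℕ} (he : e ≠ 0)
    {v : ι → MvPolynomial σ k} (hv : ∀ i, (v i).IsHomogeneous e)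
    (hdep : ¬ AlgebraicIndependent k v) :
    ∃ (n : ℕ) (π : MvPolynomial ι k), π.IsHomogeneous n ∧ π ≠ 0 ∧ aeval v π = 0 := by
  rw [algebraicIndependent_iff] at hdep
  push Not at hdep
  obtain ⟨B, hB, hB_ne⟩ := hdep
  obtain ⟨n, hn⟩ : ∃ n, homogeneousComponent n B ≠ 0 := by
    by_contra! hzero
    exact hB_ne (by rw [← sum_homogeneousComponent B, Finset.sum_eq_zero fun i _ => hzero i])
  refine ⟨n, homogeneousComponent n B, homogeneousComponent_isHomogeneous n B, hn, ?_⟩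
  have hcomp (i : ℕ) : homogeneousComponent (e * n) (aeval v (homogeneousComponent i B)) =
      if n = i then aeval v (homogeneousComponent i B) else 0 := by
    rw [homogeneousComponent_of_mem ((homogeneousComponent_isHomogeneous i B).aeval v hv)]
    simp [he]
  have hsum := congrArg (homogeneousComponent (e * n)) hB
  rw [← sum_homogeneousComponent B, map_sum, map_sum, map_zero] at hsum
  simp only [hcomp, Finset.sum_ite_eq, Finset.mem_range] at hsum
  rwa [if_pos] at hsum
  exact of_not_not fun hlt => hn (homogeneousComponent_eq_zero _ _ (by omega))

variable [IsDomain k]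

theorem eq_zero_of_forall_pderiv_eq_zero [Finite σ] [CharZero k] {n : ℕ} (hn : n ≠ 0)
    {p : MvPolynomial σ k} (hp : p.IsHomogeneous n) (hpderiv : ∀ i, pderiv i p = 0) : p = 0 := by
  cases nonempty_fintype σ
  have heuler := hp.sum_X_mul_pderiv
  simp only [hpderiv, mul_zero, Finset.sum_const_zero] at heuler
  exact (smul_eq_zero.mp heuler.symm).resolve_left hn

-- Take a relation of least degree.
theorem exists_relation_aeval_pderiv_ne_zero [CharZero k] {ι : Type*} [Finite ι] {e : ℕ}
    (he : e ≠ 0) {v : ι → MvPolynomial σ k} (hv : ∀ i, (v i).IsHomogeneous e)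
    (hdep : ¬ AlgebraicIndependent k v) :
    ∃ (n : ℕ) (π : MvPolynomial ι k), π.IsHomogeneous n ∧ aeval v π = 0 ∧
      ∃ i, aeval v (pderiv i π) ≠ 0 := by
  classical
  have hex := exists_isHomogeneous_aeval_eq_zero he hv hdep
  obtain ⟨π, hπ, hπ_ne, hπv⟩ := Nat.find_spec hex
  refine ⟨_, π, hπ, hπv, ?_⟩
  have hdeg : Nat.find hex ≠ 0 := by
    intro hzero
    rw [hzero] at hπ
    obtain ⟨c, rfl⟩ : ∃ c, π = C c := ⟨_, totalDegree_eq_zero_iff_eq_C.mp (hπ.totalDegree hπ_ne)⟩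
    simp_all
  by_contra! hzero
  refine hπ_ne (eq_zero_of_forall_pderiv_eq_zero hdeg hπ fun i => ?_)
  by_contra hi
  exact Nat.find_min hex (Nat.sub_one_lt hdeg) ⟨pderiv i π, hπ.pderiv, hi, hzero i⟩

end HomogeneousRelations

section SelfVanishing

variable {k σ : Type*} [Field k]

/-- A Gordan–Noether system: forms `h i` of a common degree `e`, without common factor, which are
constant along the vector field `∑ i, h i • ∂ᵢ` that they define. -/
structure IsReducedSelfVanishing (e : ℕ) (h : σ → MvPolynomial σ k) : Prop where
  isHomogeneous : ∀ i, (h i).IsHomogeneous e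
  derivation_eq_zero : ∀ i, mkDerivation k h (h i) = 0
  isUnit_of_forall_dvd : ∀ q, (∀ i, q ∣ h i) → IsUnit q

theorem exists_isReducedSelfVanishing_smul_eq [Finite σ] [CharZero k] {e : ℕ}
    {h : σ → MvPolynomial σ k} (hh_ne : h ≠ 0) (hhom : ∀ i, (h i).IsHomogeneous e)
    (hh : ∀ i, mkDerivation k h (h i) = 0) :
    ∃ (e' : ℕ) (q : MvPolynomial σ k) (g : σ → MvPolynomial σ k),
      q ≠ 0 ∧ h = q • g ∧ IsReducedSelfVanishing e' g := by
  cases nonempty_fintype σ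
  let : NormalizedGCDMonoid (MvPolynomial σ k) := Classical.arbitrary _
  obtain ⟨i₀, hi₀⟩ := Function.ne_iff.mp hh_ne
  obtain ⟨g, hg, hg_gcd⟩ := Finset.extract_gcd h ⟨i₀, Finset.mem_univ i₀⟩
  set q := Finset.univ.gcd h
  replace hg (i : σ) : h i = g i * q := by rw [hg i (Finset.mem_univ i), mul_comm]
  have hq : q ≠ 0 := right_ne_zero_of_mul (hg i₀ ▸ hi₀)
  have hsmul : h = q • g := funext fun i => (hg i).trans (mul_comm _ _)
  refine ⟨e - q.totalDegree, q, g, hq, hsmul, fun i => ?_, fun i => ?_, fun r hr => ?_⟩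
  · rcases eq_or_ne (g i) 0 with hgi | hgi
    · exact hgi ▸ isHomogeneous_zero _ _ _
    · have hmul := mul_ne_zero hgi hq
      have hdeg := (hg i ▸ hhom i).totalDegree hmul
      rw [totalDegree_mul_of_isDomain hgi hq] at hdeg
      rw [← hdeg, Nat.add_sub_cancel]
      exact isHomogeneous_totalDegree_of_mul (hg i ▸ hhom i) hmul
  · rcases eq_or_ne (g i) 0 with hgi | hgi
    · rw [hgi, map_zero]
    · have hDg := mkDerivation_eq_zero_of_mul hh (hg i ▸ hh i) (mul_ne_zero hgi hq)
      rw [hsmul, mkDerivation_smul, Derivation.smul_apply, smul_eq_mul] at hDg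
      exact (mul_eq_zero.mp hDg).resolve_left hq
  · exact isUnit_of_dvd_one (hg_gcd ▸ Finset.dvd_gcd fun i _ => hr i)

-- With `π` a relation between the partial derivatives of `f`, take `h i = (∂ᵢ π)(∂ f)`.
theorem exists_selfVanishing_of_not_algebraicIndependent_pderiv [Finite σ] [CharZero k]
    {f : MvPolynomial σ k} {d : ℕ} (hd : 2 ≤ d) (hf : f.IsHomogeneous d)
    (hdep : ¬ AlgebraicIndependent k fun j => pderiv j f) :
    ∃ (e : ℕ) (h : σ → MvPolynomial σ k), h ≠ 0 ∧ (∀ i, (h i).IsHomogeneous e) ∧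
      (∀ i, mkDerivation k h (h i) = 0) ∧ ∀ j, mkDerivation k h (pderiv j f) = 0 := by
  cases nonempty_fintype σ
  obtain ⟨n, π, hπ, hπf, i₀, hi₀⟩ := exists_relation_aeval_pderiv_ne_zero
    (Nat.sub_ne_zero_of_lt hd) (fun _ => hf.pderiv) hdep
  have hDf (j : σ) :
      mkDerivation k (fun i => aeval (pderiv · f) (pderiv i π)) (pderiv j f) = 0 := by
    rw [mkDerivation_apply_eq_sum, ← map_zero (pderiv j), ← hπf, derivation_aeval]
    exact Finset.sum_congr rfl fun i _ => by rw [pderiv_comm]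
  refine ⟨_, _, Function.ne_iff.mpr ⟨i₀, hi₀⟩, fun i => hπ.pderiv.aeval _ fun _ => hf.pderiv,
    fun i => ?_, hDf⟩
  rw [derivation_aeval]
  exact Finset.sum_eq_zero fun j _ => by rw [hDf j, mul_zero]

theorem exists_isReducedSelfVanishing_of_mkDerivation_pderiv_eq_zero [Finite σ] [CharZero k]
    {f : MvPolynomial σ k} {d : ℕ} (hd : 2 ≤ d) (hf : f.IsHomogeneous d)
    {c : σ → MvPolynomial σ k} (hc : c ≠ 0) (hcf : ∀ j, mkDerivation k c (pderiv j f) = 0) :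
    ∃ (e : ℕ) (h : σ → MvPolynomial σ k), IsReducedSelfVanishing e h ∧
      ∀ j, mkDerivation k h (pderiv j f) = 0 := by
  obtain ⟨e, h, hh_ne, hhom, hh, hhf⟩ := exists_selfVanishing_of_not_algebraicIndependent_pderiv
    hd hf (not_algebraicIndependent_of_mkDerivation_eq_zero hc hcf)
  obtain ⟨e', q, g, hq, rfl, hg⟩ := exists_isReducedSelfVanishing_smul_eq hh_ne hhom hh
  refine ⟨e', g, hg, fun j => ?_⟩
  have hqg := hhf j
  rw [mkDerivation_smul, Derivation.smul_apply, smul_eq_mul] at hqg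
  exact (mul_eq_zero.mp hqg).resolve_left hq

theorem mkDerivation_eq_zero_of_forall_pderiv [Finite σ] [CharZero k] {f : MvPolynomial σ k}
    {d : ℕ} (hd : d ≠ 1) (hf : f.IsHomogeneous d) {h : σ → MvPolynomial σ k}
    (hhf : ∀ j, mkDerivation k h (pderiv j f) = 0) : mkDerivation k h f = 0 := by
  cases nonempty_fintype σ
  have heuler := congrArg (mkDerivation k h) hf.sum_X_mul_pderiv
  simp only [map_sum, map_nsmul, Derivation.leibniz, hhf, mkDerivation_X, smul_eq_mul, mul_zero,
    zero_add, mul_comm _ (h _)] at heuler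
  rw [← mkDerivation_apply_eq_sum, nsmul_eq_mul] at heuler
  have hmul : ((d : MvPolynomial σ k) - 1) * mkDerivation k h f = 0 := by
    linear_combination -heuler
  refine (mul_eq_zero.mp hmul).resolve_left (sub_ne_zero.mpr ?_)
  exact_mod_cast hd

end SelfVanishing

section Minors

variable {k σ A : Type*} [CommRing k] [CommRing A] [Algebra k A]

/-- The `2 × 2` minors of the matrix with rows `z` and `v`; for `z ≠ 0` over a field they
all vanish exactly when `v` is proportional to `z`. -/
def minor (z : σ → k) (v : σ → A) (i j : σ) : A := z i • v j - z j • v i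

theorem map_minor {B : Type*} [CommRing B] [Algebra k B] (φ : A →ₐ[k] B) (z : σ → k) (v : σ → A)
    (i j : σ) : φ (minor z v i j) = minor z (φ ∘ v) i j := by
  simp [minor]

theorem isHomogeneous_minor {e : ℕ} {h : σ → MvPolynomial σ k} (hh : ∀ i, (h i).IsHomogeneous e)
    (z : σ → k) (i j : σ) : (minor z h i j).IsHomogeneous e :=
  (homogeneousSubmodule σ k e).sub_mem (Submodule.smul_mem _ _ (hh j))
    (Submodule.smul_mem _ _ (hh i))

theorem derivation_minor_eq_zero {D : Derivation k A A} {v : σ → A} (hv : ∀ i, D (v i) = 0)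
    (z : σ → k) (i j : σ) : D (minor z v i j) = 0 := by
  simp [minor, hv]

theorem mkDerivation_C_minor_X (z : σ → k) (i j : σ) :
    mkDerivation k (C ∘ z : σ → MvPolynomial σ k) (minor z X i j) = 0 := by
  simp [minor, mkDerivation_X, smul_eq_C_mul, mul_comm]

theorem aeval_minor_X (z : σ → k) (v : σ → A) (i j : σ) :
    aeval v (minor z (X : σ → MvPolynomial σ k) i j) = minor z v i j := by
  simp [minor]

theorem dvd_mkDerivation_C_of_forall_dvd_minor [Finite σ]
    {h : σ → MvPolynomial σ k} {P : MvPolynomial σ k} (hP : Prime P) {z : σ → k}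
    (hP_dvd : ∀ i j, P ∣ minor z h i j) {n : σ} (hPn : ¬ P ∣ h n) (hDP : mkDerivation k h P = 0) :
    P ∣ mkDerivation k (C ∘ z : σ → MvPolynomial σ k) P := by
  cases nonempty_fintype σ
  refine (hP.dvd_or_dvd ?_).resolve_left hPn
  have hsum : h n * mkDerivation k (C ∘ z : σ → MvPolynomial σ k) P =
      ∑ i, -(minor z h n i * pderiv i P) := by
    have hzn : C (z n) * mkDerivation k h P = 0 := by rw [hDP, mul_zero]
    rw [← sub_zero (h n * _), ← hzn, mkDerivation_apply_eq_sum, mkDerivation_apply_eq_sum,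
      Finset.mul_sum, Finset.mul_sum, ← Finset.sum_sub_distrib]
    refine Finset.sum_congr rfl fun i _ => ?_
    simp only [minor, smul_eq_C_mul, Function.comp_apply]
    ring
  rw [hsum]
  exact Finset.dvd_sum fun i _ => ((hP_dvd n i).mul_right _).neg_right

end Minors

section Pencil

variable {k σ : Type*} [Field k] [CharZero k] [Finite σ] {e : ℕ} {a b : MvPolynomial σ k}

theorem eq_zero_of_mul_pderiv_eq_mul_pderiv (he : e ≠ 0) (ha : a.IsHomogeneous e)
    (hab : IsRelPrime a b) (hwronskian : ∀ j, a * pderiv j b = b * pderiv j a) : a = 0 :=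
  eq_zero_of_forall_pderiv_eq_zero he ha fun j =>
    eq_zero_of_dvd_of_isHomogeneous_of_lt ha ha.pderiv (Nat.sub_one_lt he)
      (hab.dvd_of_dvd_mul_left ⟨_, (hwronskian j).symm⟩)

theorem eq_zero_and_eq_zero_of_mul_add_mul_eq_zero (he : e ≠ 0) (ha : a.IsHomogeneous e)
    (hb : b.IsHomogeneous e) (hab : IsRelPrime a b) {F G : MvPolynomial σ k}
    (hFG : a * F + b * G = 0) (hFG_pderiv : ∀ j, pderiv j a * F + pderiv j b * G = 0) :
    F = 0 ∧ G = 0 := by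
  by_contra hFG_ne
  have hwronskian (j : σ) : a * pderiv j b = b * pderiv j a := by
    rcases not_and_or.mp hFG_ne with hF | hG
    · apply mul_right_cancel₀ hF
      linear_combination pderiv j b * hFG - b * hFG_pderiv j
    · apply mul_right_cancel₀ hG
      linear_combination a * hFG_pderiv j - pderiv j a * hFG
  have ha_zero := eq_zero_of_mul_pderiv_eq_mul_pderiv he ha hab hwronskian
  have hb_zero := eq_zero_of_mul_pderiv_eq_mul_pderiv he hb hab.symm fun j => (hwronskian j).symm
  rw [ha_zero, hb_zero] at hab
  exact not_isUnit_zero (hab dvd_rfl dvd_rfl)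

end Pencil

namespace IsReducedSelfVanishing

variable {k σ : Type*} [Field k] {e : ℕ} {h : σ → MvPolynomial σ k}

theorem ne_zero (hh : IsReducedSelfVanishing e h) : h ≠ 0 := by
  rintro rfl
  exact not_isUnit_zero (hh.isUnit_of_forall_dvd 0 fun _ => dvd_rfl)

theorem not_algebraicIndependent_of_map_eq_zero [Fintype σ] (hh : IsReducedSelfVanishing e h)
    (hσ : Fintype.card σ ≤ 4) {A : Type*} [CommRing A] [IsDomain A] [Algebra k A]
    (φ : MvPolynomial σ k →ₐ[k] A) (hφ : ∀ i, φ (h i) = 0) (v : Fin 3 → MvPolynomial σ k) :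
    ¬ AlgebraicIndependent k (φ ∘ v) := fun hv => by
  have := add_two_le_card_of_algebraicIndependent φ hh.isUnit_of_forall_dvd hφ hv
  omega

variable [CharZero k]

theorem aeval_self (hh : IsReducedSelfVanishing e h) (he : e ≠ 0) (i : σ) : aeval h (h i) = 0 :=
  aeval_eq_zero_of_mkDerivation_eq_zero hh.derivation_eq_zero he (hh.isHomogeneous i)
    (hh.derivation_eq_zero i)

-- The image of `h` is a cone of dimension at most two, so the fibre through `y` of the rational
-- map to projective space defined by `h` contains a hypersurface `P = 0`.
theorem exists_irreducible_forall_dvd_minor [Fintype σ] (hh : IsReducedSelfVanishing e h)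
    (he : e ≠ 0) (hσ : Fintype.card σ ≤ 4) {y : σ → k} {n i₀ j₀ : σ} (hn : aeval y (h n) ≠ 0)
    (hminor : minor (fun i => aeval y (h i)) h i₀ j₀ ≠ 0) :
    ∃ P, Irreducible P ∧ (∀ i j, P ∣ minor (fun i => aeval y (h i)) h i j) ∧ ¬ P ∣ h n := by
  set z : σ → k := fun i => aeval y (h i)
  have hφ_minor (i j : σ) : lineHom 0 y (minor z h i j) = 0 := by
    rw [lineHom_zero_of_isHomogeneous y (isHomogeneous_minor hh.isHomogeneous z i j), map_minor]
    simp [minor, z, mul_comm]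
  obtain ⟨P, hP, hP_dvd, hφP⟩ := exists_irreducible_dvd_map_eq_zero
    (lineHom 0 y) hminor (hφ_minor i₀ j₀)
  refine ⟨P, hP, fun i j => ?_, fun hPn => ?_⟩
  · by_contra hPij
    refine hh.not_algebraicIndependent_of_map_eq_zero hσ (aeval h) (hh.aeval_self he)
      ![minor z X i₀ j₀, minor z X i j, X n] ?_
    convert algebraicIndependent_finCons_finCons_of_map_eq_zero (lineHom 0 y) hP.prime hφP hminor
      hP_dvd hPij (hφ_minor i j)
      (algebraicIndependent_lineHom_zero he (hh.isHomogeneous n) hn) using 1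
    funext l
    fin_cases l
    exacts [aeval_minor_X z h i₀ j₀, aeval_minor_X z h i j, aeval_X h n]
  · have hzero : lineHom 0 y (h n) = 0 := zero_dvd_iff.mp (hφP ▸ map_dvd (lineHom 0 y) hPn)
    rw [lineHom_zero_of_isHomogeneous y (hh.isHomogeneous n)] at hzero
    simp_all

theorem mkDerivation_C_eq_zero_and_aeval_eq_zero_of_forall_dvd_minor [Finite σ]
    (hh : IsReducedSelfVanishing e h) {P : MvPolynomial σ k} (hP : Irreducible P) {z : σ → k}
    (hP_dvd : ∀ i j, P ∣ minor z h i j) {i₀ j₀ n : σ} (hminor : minor z h i₀ j₀ ≠ 0)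
    (hPn : ¬ P ∣ h n) :
    mkDerivation k (C ∘ z : σ → MvPolynomial σ k) P = 0 ∧ aeval h P = 0 := by
  cases nonempty_fintype σ
  obtain ⟨Q, hQ⟩ := hP_dvd i₀ j₀
  have hDP : mkDerivation k h P = 0 := mkDerivation_eq_zero_of_mul hh.derivation_eq_zero
    (hQ ▸ derivation_minor_eq_zero hh.derivation_eq_zero z i₀ j₀) (hQ ▸ hminor)
  have hP_hom : P.IsHomogeneous P.totalDegree := isHomogeneous_totalDegree_of_mul
    (hQ ▸ isHomogeneous_minor hh.isHomogeneous z i₀ j₀) (hQ ▸ hminor)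
  have hdeg : P.totalDegree ≠ 0 := by
    intro hdeg
    rw [totalDegree_eq_zero_iff_eq_C] at hdeg
    refine hP.not_isUnit (hdeg ▸ ((IsUnit.mk0 _ fun hcoeff => hP.ne_zero ?_).map C))
    rw [hdeg, hcoeff, C_0]
  refine ⟨?_, aeval_eq_zero_of_mkDerivation_eq_zero hh.derivation_eq_zero hdeg hP_hom hDP⟩
  refine eq_zero_of_dvd_of_isHomogeneous_of_lt hP_hom ?_ (Nat.sub_one_lt hdeg)
    (dvd_mkDerivation_C_of_forall_dvd_minor hP.prime hP_dvd hPn hDP)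
  rw [mkDerivation_apply_eq_sum]
  refine IsHomogeneous.sum _ _ _ fun i _ => ?_
  exact hP_hom.pderiv.C_mul (z i)

theorem lineHom_minor_eq_zero [Fintype σ] (hh : IsReducedSelfVanishing e h) (he : e ≠ 0)
    (hσ : Fintype.card σ ≤ 4) {y : σ → k} {n : σ} (hn : aeval y (h n) ≠ 0) (i j : σ) :
    lineHom h (C ∘ fun i => aeval y (h i)) (minor (fun i => aeval y (h i)) h i j) = 0 := by
  by_cases hminor : minor (fun i => aeval y (h i)) h i j = 0
  · rw [hminor, map_zero]
  obtain ⟨P, hP, hP_dvd, hPn⟩ := hh.exists_irreducible_forall_dvd_minor he hσ hn hminor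
  obtain ⟨hDP, hP_aeval⟩ :=
    hh.mkDerivation_C_eq_zero_and_aeval_eq_zero_of_forall_dvd_minor hP hP_dvd hminor hPn
  have hdvd := map_dvd (lineHom h (C ∘ fun i => aeval y (h i))) (hP_dvd i j)
  rwa [lineHom_C_comp_eq_C hDP, hP_aeval, map_zero, zero_dvd_iff] at hdvd

-- At a point `v` of the line `h + t z` with `h v ≠ 0`, the vector `h v` is proportional to `z`, so
-- the line is the trajectory through `v`, along which `h` is constant; but `h` vanishes at `t = 0`.
theorem lineHom_self_eq_zero [Fintype σ] (hh : IsReducedSelfVanishing e h) (he : e ≠ 0)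
    (hσ : Fintype.card σ ≤ 4) {y : σ → k} {n : σ} (hn : aeval y (h n) ≠ 0) (l : σ) :
    lineHom h (C ∘ fun i => aeval y (h i)) (h l) = 0 := by
  set z : σ → k := fun i => aeval y (h i)
  set F : σ → Polynomial (MvPolynomial σ k) := fun i => lineHom h (C ∘ z) (h i)
  have hF (i : σ) : z n • F i = z i • F n := by
    have := hh.lineHom_minor_eq_zero he hσ hn n i
    rwa [minor, map_sub, map_smul, map_smul, sub_eq_zero] at this
  replace hn : z n ≠ 0 := hn
  suffices hFn : F n = 0 by
    have := hF l
    rwa [hFn, smul_zero, smul_eq_zero_iff_right hn] at this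
  by_contra hFn
  obtain ⟨s, hs⟩ : ∃ s, (F n).eval s ≠ 0 := by
    by_contra! hzero
    exact hFn (Polynomial.funext (by simpa using hzero))
  set c : MvPolynomial σ k := (z n)⁻¹ • (F n).eval s
  have hc : c ≠ 0 := smul_ne_zero (inv_ne_zero hn) hs
  set v : σ → MvPolynomial σ k := fun i => h i + C (z i) * s
  have hv (i : σ) : aeval v (h i) = C (z i) * c := by
    have heval := congrArg (fun G => (z n)⁻¹ • Polynomial.eval s G) (hF i)
    simp only [Polynomial.eval_smul, inv_smul_smul₀ hn, F, eval_lineHom] at heval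
    rw [← smul_eq_C_mul, smul_comm, ← eval_lineHom]
    simpa only [F, eval_lineHom, Function.comp_apply] using heval
  have hcomp : (F n).comp (Polynomial.C s + Polynomial.C c * Polynomial.X) =
      Polynomial.C (aeval v (h n)) := by
    rw [← lineHom_aeval_eq_C hh.derivation_eq_zero (hh.derivation_eq_zero n), lineHom_comp_linear]
    simp only [hv]
    rfl
  have hdeg := congrArg Polynomial.natDegree hcomp
  rw [Polynomial.natDegree_comp, Polynomial.natDegree_C, add_comm,
    Polynomial.natDegree_linear hc, mul_one] at hdeg
  refine hFn ?_
  rw [Polynomial.eq_C_of_natDegree_eq_zero hdeg, coeff_zero_lineHom, hh.aeval_self he, map_zero]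

variable [Fintype σ]

theorem not_algebraicIndependent_aeval_pair (hh : IsReducedSelfVanishing e h) (he : e ≠ 0)
    (hσ : Fintype.card σ ≤ 4) {y : σ → k} {n : σ} (hn : aeval y (h n) ≠ 0)
    {p q : MvPolynomial σ k}
    (hp : mkDerivation k (C ∘ fun i => aeval y (h i) : σ → MvPolynomial σ k) p = 0)
    (hq : mkDerivation k (C ∘ fun i => aeval y (h i) : σ → MvPolynomial σ k) q = 0) :
    ¬ AlgebraicIndependent k ![aeval h p, aeval h q] := by
  intro hind
  set z : σ → k := fun i => aeval y (h i)
  refine hh.not_algebraicIndependent_of_map_eq_zero hσ (lineHom h (C ∘ z))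
    (hh.lineHom_self_eq_zero he hσ hn) ![X n, p, q] ?_
  let ψ : Polynomial (MvPolynomial σ k) →ₐ[k] MvPolynomial σ k :=
    (Polynomial.aeval (-(C (z n)⁻¹ * h n))).restrictScalars k
  have hX_ne : lineHom h (C ∘ z) (X n : MvPolynomial σ k) ≠ 0 := fun hzero => hn <| by
    simpa [z] using congrArg (Polynomial.coeff · 1) hzero
  have hψX : ψ (lineHom h (C ∘ z) (X n : MvPolynomial σ k)) = 0 := by
    have hinv : (C (z n) * C (z n)⁻¹ : MvPolynomial σ k) = 1 := by
      rw [← C_mul, mul_inv_cancel₀ hn, C_1]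
    simp only [ψ, lineHom_X, AlgHom.restrictScalars_apply, map_add, map_mul, Polynomial.aeval_C,
      Polynomial.aeval_X, Algebra.algebraMap_self, RingHom.id_apply, Function.comp_apply]
    linear_combination -h n * hinv
  convert algebraicIndependent_finCons_of_map_eq_zero ψ hX_ne hψX
    (v := ![Polynomial.C (aeval h p), Polynomial.C (aeval h q)]) ?_ using 1
  · funext l
    fin_cases l
    exacts [rfl, lineHom_C_comp_eq_C hp h, lineHom_C_comp_eq_C hq h]
  · convert hind using 1
    funext l
    fin_cases l <;> simp [ψ]

theorem exists_minor_eq_smul (hh : IsReducedSelfVanishing e h) (he : e ≠ 0)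
    (hσ : Fintype.card σ ≤ 4) {y : σ → k} {n : σ} (hn : aeval y (h n) ≠ 0) :
    ∃ b : MvPolynomial σ k, b.IsHomogeneous e ∧
      ∀ j, ∃ r : k, minor (fun i => aeval y (h i)) h n j = r • b := by
  have : Infinite k := CharZero.infinite k
  have hhom (j : σ) := isHomogeneous_minor hh.isHomogeneous (fun i => aeval y (h i)) n j
  by_cases hminor : ∀ j, minor (fun i => aeval y (h i)) h n j = 0
  · exact ⟨0, isHomogeneous_zero _ _ _, fun j => ⟨0, by rw [hminor, smul_zero]⟩⟩
  obtain ⟨j₀, hj₀⟩ := not_forall.mp hminor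
  refine ⟨_, hhom j₀, fun j =>
    exists_eq_smul_of_not_algebraicIndependent he (hhom j) (hhom j₀) hj₀ ?_⟩
  simpa only [aeval_minor_X] using hh.not_algebraicIndependent_aeval_pair he hσ hn
    (mkDerivation_C_minor_X _ n j) (mkDerivation_C_minor_X _ n j₀)

theorem exists_eq_smul_add_smul (hh : IsReducedSelfVanishing e h) (he : e ≠ 0)
    (hσ : Fintype.card σ ≤ 4) :
    ∃ (a b : MvPolynomial σ k) (α β : σ → k), a.IsHomogeneous e ∧ b.IsHomogeneous e ∧
      ∀ i, h i = α i • a + β i • b := by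
  have : Infinite k := CharZero.infinite k
  obtain ⟨n, hn⟩ := Function.ne_iff.mp hh.ne_zero
  obtain ⟨y, hy⟩ := exists_aeval_ne_zero hn
  obtain ⟨b, hb, hminor⟩ := hh.exists_minor_eq_smul he hσ hy
  choose r hr using hminor
  refine ⟨h n, b, fun i => (aeval y (h n))⁻¹ * aeval y (h i), fun i => (aeval y (h n))⁻¹ * r i,
    hh.isHomogeneous n, hb, fun i => ?_⟩
  rw [mul_smul, mul_smul, ← smul_add, ← hr, minor, add_sub_cancel, inv_smul_smul₀ hy]

end IsReducedSelfVanishing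

section Cone

variable {k σ : Type*} [Field k] [CharZero k] [Fintype σ] {f : MvPolynomial σ k} {d e : ℕ}
  {h : σ → MvPolynomial σ k}

theorem sum_smul_pderiv_eq_zero_of_eq_smul_add_smul (hd : d ≠ 1) (hf : f.IsHomogeneous d)
    (hh : IsReducedSelfVanishing e h) (hhf : ∀ j, mkDerivation k h (pderiv j f) = 0) (he : e ≠ 0)
    {a b : MvPolynomial σ k} {α β : σ → k} (ha : a.IsHomogeneous e) (hb : b.IsHomogeneous e)
    (hαβ : ∀ i, h i = α i • a + β i • b) :
    ∑ i, α i • pderiv i f = 0 ∧ ∑ i, β i • pderiv i f = 0 := by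
  have hab : IsRelPrime a b := fun q hqa hqb => hh.isUnit_of_forall_dvd q fun i =>
    hαβ i ▸ dvd_add (dvd_smul_of_dvd _ hqa) (dvd_smul_of_dvd _ hqb)
  have hsum (p : MvPolynomial σ k) :
      mkDerivation k h p = a * ∑ i, α i • pderiv i p + b * ∑ i, β i • pderiv i p := by
    rw [mkDerivation_apply_eq_sum, Finset.mul_sum, Finset.mul_sum, ← Finset.sum_add_distrib]
    refine Finset.sum_congr rfl fun i _ => ?_
    rw [hαβ i, add_mul, mul_smul_comm, mul_smul_comm, smul_mul_assoc, smul_mul_assoc]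
  have hf_zero := (hsum f).symm.trans (mkDerivation_eq_zero_of_forall_pderiv hd hf hhf)
  refine eq_zero_and_eq_zero_of_mul_add_mul_eq_zero he ha hb hab hf_zero fun j => ?_
  have hpderiv_sum (γ : σ → k) :
      pderiv j (∑ i, γ i • pderiv i f) = ∑ i, γ i • pderiv i (pderiv j f) := by
    simp only [map_sum, Derivation.map_smul, pderiv_comm j]
  have hleibniz := congrArg (pderiv j) hf_zero
  simp only [map_add, pderiv_mul, map_zero, hpderiv_sum] at hleibniz
  linear_combination hleibniz - (hsum (pderiv j f)).symm.trans (hhf j)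

theorem exists_ne_zero_sum_smul_pderiv_eq_zero_of_mkDerivation (hσ : Fintype.card σ ≤ 4)
    (hd : 2 ≤ d) (hf : f.IsHomogeneous d) {c : σ → MvPolynomial σ k} (hc : c ≠ 0)
    (hcf : ∀ j, mkDerivation k c (pderiv j f) = 0) :
    ∃ c : σ → k, c ≠ 0 ∧ ∑ i, c i • pderiv i f = 0 := by
  obtain ⟨e, h, hh, hhf⟩ :=
    exists_isReducedSelfVanishing_of_mkDerivation_pderiv_eq_zero hd hf hc hcf
  rcases eq_or_ne e 0 with rfl | he
  · have hconst (i : σ) : C (coeff 0 (h i)) = h i :=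
      (totalDegree_eq_zero_iff_eq_C.mp
        ((totalDegree_zero_iff_isHomogeneous σ).mpr (hh.isHomogeneous i))).symm
    refine ⟨fun i => coeff 0 (h i), fun hzero => hh.ne_zero (funext fun i => ?_), ?_⟩
    · rw [← hconst i, congrFun hzero i, Pi.zero_apply, C_0, Pi.zero_apply]
    · simp only [smul_eq_C_mul, hconst, ← mkDerivation_apply_eq_sum]
      exact mkDerivation_eq_zero_of_forall_pderiv (by omega) hf hhf
  · obtain ⟨a, b, α, β, ha, hb, hαβ⟩ := hh.exists_eq_smul_add_smul he hσ
    obtain ⟨hα, hβ⟩ :=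
      sum_smul_pderiv_eq_zero_of_eq_smul_add_smul (by omega) hf hh hhf he ha hb hαβ
    by_cases hα_zero : α = 0
    · refine ⟨β, fun hβ_zero => hh.ne_zero (funext fun i => ?_), hβ⟩
      simp [hαβ, hα_zero, hβ_zero]
    · exact ⟨α, hα_zero, hα⟩

end Cone

end GordanNoether

theorem hessianDet_eq_zero_iff {k : Type*} [CommRing k] [IsDomain k] {m : ℕ}
    {f : MvPolynomial (Fin m) k} :
    hessianDet f = 0 ↔ ∃ c : Fin m → MvPolynomial (Fin m) k,
      c ≠ 0 ∧ ∀ j, mkDerivation k c (pderiv j f) = 0 := by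
  rw [hessianDet, ← Matrix.exists_vecMul_eq_zero_iff]
  simp only [GordanNoether.mkDerivation_apply_eq_sum, funext_iff]
  rfl

theorem stmt0_general {k : Type*} [Field k] [CharZero k] {m : ℕ} (hm : m ≤ 4)
    {f : MvPolynomial (Fin m) k} {d : ℕ} (hd : 2 ≤ d) (hhom : f.IsHomogeneous d) :
    hessianDet f = 0 ↔ ∃ c : Fin m → k, c ≠ 0 ∧ ∑ i, c i • pderiv i f = 0 := by
  rw [hessianDet_eq_zero_iff]
  constructor
  · rintro ⟨c, hc, hcf⟩
    exact GordanNoether.exists_ne_zero_sum_smul_pderiv_eq_zero_of_mkDerivation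
      (by rwa [Fintype.card_fin]) hd hhom hc hcf
  · rintro ⟨c, hc, hcf⟩
    refine ⟨C ∘ c, fun hzero => hc (funext fun i => C_injective (Fin m) k ?_), fun j => ?_⟩
    · simpa using congrFun hzero i
    · rw [GordanNoether.mkDerivation_apply_eq_sum, ← map_zero (pderiv j), ← hcf, map_sum]
      refine Finset.sum_congr rfl fun i _ => ?_
      rw [Derivation.map_smul, smul_eq_C_mul, GordanNoether.pderiv_comm, Function.comp_apply]

/-- Hesse's claim holds in `ℙ³`: for a squarefree homogeneous polynomial `f` of degree
`d ≥ 3` in four variables over an algebraically closed field of characteristic zero,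
the Hessian of `f` vanishes identically iff the partial derivatives of `f` are linearly
dependent, i.e. iff `V(f)` is a cone. -/
theorem stmt0 {k : Type*} [Field k] [IsAlgClosed k] [CharZero k]
    (f : MvPolynomial (Fin 4) k) (d : ℕ) (hd : 3 ≤ d)
    (hsf : Squarefree f) (hhom : f.IsHomogeneous d) :
    hessianDet f = 0 ↔
      ∃ c : Fin 4 → k, c ≠ 0 ∧ ∑ i, c i • pderiv i f = 0 :=
  stmt0_general le_rfl (by omega) hhom
end

section
/- Let k be an algebraically closed field of characteristic zero and let f ∈ k[x_0, x_1] be a squarefree homogeneous polynomial of degree d ≥ 1. Then the Hessian polynomial h_f (the determinant of the 2×2 matrix of second partial derivatives of f) is identically zero if and only if d = 1. -/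
open MvPolynomial

/-!
Write `fᵢ`, `fᵢⱼ` for the partial derivatives of a binary form `f` of degree `d`, and `h` for its
Hessian. Applying Euler's identity to `f`, `f₀` and `f₁` gives, for `i ≠ j`,
`xⱼ² h = d (d - 1) f fᵢᵢ - ((d - 1) fᵢ)²`.
If `h = 0`, then `f` divides the square of `(d - 1) fᵢ`, hence `(d - 1) fᵢ` itself because `f` is
radical. The latter has degree less than `d`, so it vanishes, and Euler's identity for `f` yields
`d (d - 1) f = 0`.
-/

section

variable {σ R : Type*}

theorem pderiv_pderiv_comm [CommRing R] (i j : σ) (f : MvPolynomial σ R) :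
    pderiv i (pderiv j f) = pderiv j (pderiv i f) := by
  classical
  have commutator_eq_zero : ⁅pderiv (R := R) i, pderiv (R := R) j⁆ = 0 :=
    derivation_ext fun l => by
      simp only [Derivation.commutator_apply, pderiv_X, Pi.single_apply]
      split_ifs <;> simp
  simpa only [Derivation.commutator_apply, Derivation.zero_apply, sub_eq_zero]
    using DFunLike.congr_fun commutator_eq_zero f

theorem pderiv_eq_zero_of_isHomogeneous_zero [CommSemiring R] {f : MvPolynomial σ R}
    (hf : f.IsHomogeneous 0) (i : σ) : pderiv i f = 0 := by
  rw [totalDegree_eq_zero_iff_eq_C.1 (Nat.le_zero.1 hf.totalDegree_le), pderiv_C]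

theorem eq_zero_of_dvd_of_totalDegree_lt [CommSemiring R] [NoZeroDivisors R]
    {f g : MvPolynomial σ R} (hdvd : f ∣ g) (hlt : g.totalDegree < f.totalDegree) : g = 0 := by
  by_contra hg
  exact hlt.not_ge (totalDegree_le_of_dvd_of_isDomain hdvd hg)

end

section Hessian

variable {k : Type*} [CommRing k]

theorem hessianDet_eq_zero_of_isHomogeneous_one {m : ℕ} [NeZero m] {f : MvPolynomial (Fin m) k}
    (hf : f.IsHomogeneous 1) : hessianDet f = 0 :=
  Matrix.det_eq_zero_of_row_eq_zero 0 fun _ => pderiv_eq_zero_of_isHomogeneous_zero hf.pderiv 0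

theorem hessianDet_fin_two_of_ne (f : MvPolynomial (Fin 2) k) {i j : Fin 2} (hij : i ≠ j) :
    hessianDet f = pderiv i (pderiv i f) * pderiv j (pderiv j f) - pderiv i (pderiv j f) ^ 2 := by
  rw [hessianDet, Matrix.det_fin_two]
  simp only [Matrix.of_apply]
  rw [pderiv_pderiv_comm 1 0 f]
  obtain ⟨rfl, rfl⟩ | ⟨rfl, rfl⟩ : i = 0 ∧ j = 1 ∨ i = 1 ∧ j = 0 := by omega
  · ring
  · rw [pderiv_pderiv_comm 1 0 f]
    ring

theorem X_mul_pderiv_add_X_mul_pderiv {f : MvPolynomial (Fin 2) k} {d : ℕ}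
    (hf : f.IsHomogeneous d) {i j : Fin 2} (hij : i ≠ j) :
    X i * pderiv i f + X j * pderiv j f = d • f := by
  rw [← hf.sum_X_mul_pderiv, Fintype.sum_eq_add i j hij]
  omega

theorem X_sq_mul_hessianDet {f : MvPolynomial (Fin 2) k} {d : ℕ} (hf : f.IsHomogeneous d)
    {i j : Fin 2} (hij : i ≠ j) :
    X j ^ 2 * hessianDet f =
      (d * (d - 1)) • (f * pderiv i (pderiv i f)) - ((d - 1) • pderiv i f) ^ 2 := by
  have euler := X_mul_pderiv_add_X_mul_pderiv hf hij
  have euler_i := X_mul_pderiv_add_X_mul_pderiv (hf.pderiv (i := i)) hij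
  have euler_j := X_mul_pderiv_add_X_mul_pderiv (hf.pderiv (i := j)) hij
  rw [pderiv_pderiv_comm j i] at euler_i
  have euler_second : (d * (d - 1)) • f = X i ^ 2 * pderiv i (pderiv i f) +
      2 * X i * X j * pderiv i (pderiv j f) + X j ^ 2 * pderiv j (pderiv j f) := by
    rw [mul_comm, mul_smul, ← euler, smul_add, ← mul_smul_comm, ← mul_smul_comm, ← euler_i,
      ← euler_j]
    ring
  rw [hessianDet_fin_two_of_ne f hij, ← smul_mul_assoc, euler_second, ← euler_i]
  ring

variable [IsDomain k] {f : MvPolynomial (Fin 2) k} {d : ℕ}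

theorem nsmul_pderiv_eq_zero_of_hessianDet_eq_zero (hd : d ≠ 0) (hf0 : f ≠ 0)
    (hrad : IsRadical f) (hf : f.IsHomogeneous d) (hH : hessianDet f = 0) (i : Fin 2) :
    (d - 1) • pderiv i f = 0 := by
  obtain ⟨j, hji⟩ := exists_ne i
  have sq_eq : ((d - 1) • pderiv i f) ^ 2 = f * ((d * (d - 1)) • pderiv i (pderiv i f)) := by
    have h := X_sq_mul_hessianDet hf hji.symm
    rwa [hH, mul_zero, eq_comm, sub_eq_zero, eq_comm, ← mul_smul_comm] at h
  have hdvd : f ∣ (d - 1) • pderiv i f := hrad 2 _ (Dvd.intro _ sq_eq.symm)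
  refine eq_zero_of_dvd_of_totalDegree_lt hdvd ?_
  calc ((d - 1) • pderiv i f).totalDegree
      ≤ (pderiv i f).totalDegree := totalDegree_smul_le _ _
    _ ≤ d - 1 := hf.pderiv.totalDegree_le
    _ < d := Nat.sub_one_lt hd
    _ = f.totalDegree := (hf.totalDegree hf0).symm

theorem hessianDet_ne_zero_of_isRadical (hd : ((d * (d - 1) : ℕ) : k) ≠ 0) (hf0 : f ≠ 0)
    (hrad : IsRadical f) (hf : f.IsHomogeneous d) : hessianDet f ≠ 0 := by
  intro hH
  have hd0 : d ≠ 0 := by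
    rintro rfl
    simp at hd
  have hpderiv := nsmul_pderiv_eq_zero_of_hessianDet_eq_zero hd0 hf0 hrad hf hH
  have hnsmul : (d * (d - 1)) • f = 0 := by
    rw [mul_comm, mul_smul, ← hf.sum_X_mul_pderiv, Finset.smul_sum]
    exact Finset.sum_eq_zero fun i _ => by rw [← mul_smul_comm, hpderiv i, mul_zero]
  rw [← Nat.cast_smul_eq_nsmul k] at hnsmul
  exact smul_ne_zero hd hf0 hnsmul

end Hessian

theorem stmt2_general {k : Type*} [CommRing k] [IsDomain k] [CharZero k]
    (f : MvPolynomial (Fin 2) k) (d : ℕ) (hd : 1 ≤ d)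
    (hf0 : f ≠ 0) (hrad : IsRadical f) (hhom : f.IsHomogeneous d) :
    hessianDet f = 0 ↔ d = 1 := by
  constructor
  · intro hH
    by_contra hd1
    have hcast : ((d * (d - 1) : ℕ) : k) ≠ 0 :=
      Nat.cast_ne_zero.2 (Nat.mul_ne_zero (by omega) (by omega))
    exact hessianDet_ne_zero_of_isRadical hcast hf0 hrad hhom hH
  · rintro rfl
    exact hessianDet_eq_zero_of_isHomogeneous_one hhom

/-- Hesse's claim holds in `ℙ¹`: for a squarefree homogeneous polynomial `f` of degree
`d ≥ 1` in two variables over an algebraically closed field of characteristic zero,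
the Hessian of `f` vanishes identically iff `d = 1`. -/
theorem stmt2 {k : Type*} [Field k] [IsAlgClosed k] [CharZero k]
    (f : MvPolynomial (Fin 2) k) (d : ℕ) (hd : 1 ≤ d)
    (hsf : Squarefree f) (hhom : f.IsHomogeneous d) :
    hessianDet f = 0 ↔ d = 1 :=
  stmt2_general f d hd hsf.ne_zero hsf.isRadical hhom
end
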